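/- Let Φ and Ψ be graphs satisfying the compatibility conditions for amalgamation, with the amalgamation Φ+Ψ having a single component, and let 𝒟 be the free category of the equational class 𝒦_{Φ,Ψ} generated by the arrow f : A → C. Then Φ+Ψ provides g-dinaturality if and only if the equation R⟨1_C, f⟩ ∘ β(C,…,C) ∘ α(C,…,C) ∘ T⟨f, 1_C⟩ = R⟨f, 1_A⟩ ∘ β(A,…,A) ∘ α(A,…,A) ∘ T⟨1_A, f⟩ holds in 𝒟, where ⟨u, v⟩ denotes the argument tuple with u in all positive and v in all negative argument places. -/

import Mathlib

open CategoryTheory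

universe u v

namespace GDin

/-! ### Graphs in the sense of the paper -/

/-- Vertices of a graph with `m` left-hand argument places, `n` right-hand argument
places and `g` auxiliary `G`-vertices. -/
abbrev Vtx (m n g : ℕ) := (Fin m ⊕ Fin n) ⊕ Fin g

/-- The "same component" relation generated by a set of edges. -/
def Conn {V : Type*} (E : V → V → Prop) : V → V → Prop := Relation.EqvGen E

/-- A graph in the sense of the paper.  The sign (variance) functions `sL` (for the
left-hand argument places `x₁,…,x_m`) and `sR` (for the right-hand argument places
`y₁,…,y_n`) are parameters; `true` means positive (covariant), `false` negative.
The structure also carries the number `k` of connected components together with the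
component classifier `π`. -/
structure GGraph (m n g : ℕ) (sL : Fin m → Bool) (sR : Fin n → Bool) : Type where
  edge : Vtx m n g → Vtx m n g → Prop
  symm : ∀ u v, edge u v → edge v u
  /-- condition 1: every vertex belongs to some edge -/
  covered : ∀ v, ∃ w, edge v w
  /-- condition 2: an edge joins two left-hand argument places iff they have opposite
  signs and lie in the same component -/
  condX : ∀ i j : Fin m, edge (.inl (.inl i)) (.inl (.inl j)) ↔
    (sL i = !sL j ∧ Conn edge (.inl (.inl i)) (.inl (.inl j)))
  /-- condition 3 -/
  condY : ∀ i j : Fin n, edge (.inl (.inr i)) (.inl (.inr j)) ↔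
    (sR i = !sR j ∧ Conn edge (.inl (.inr i)) (.inl (.inr j)))
  /-- condition 4 -/
  condXY : ∀ (i : Fin m) (j : Fin n), edge (.inl (.inl i)) (.inl (.inr j)) ↔
    (sL i = sR j ∧ Conn edge (.inl (.inl i)) (.inl (.inr j)))
  /-- condition 5, first half: if a component contains an edge between two argument
  places then it contains no `G`-vertex -/
  condG₁ : ∀ v : Vtx m n g,
    (∃ u w : Fin m ⊕ Fin n, Conn edge (.inl u) v ∧ edge (.inl u) (.inl w)) →
      ∀ a : Fin g, ¬ Conn edge (.inr a) v
  /-- condition 5, second half: otherwise the component contains exactly one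
  `G`-vertex -/
  condG₂ : ∀ v : Vtx m n g,
    (¬ ∃ u w : Fin m ⊕ Fin n, Conn edge (.inl u) v ∧ edge (.inl u) (.inl w)) →
      ∃! a : Fin g, Conn edge (.inr a) v
  /-- condition 5: every other vertex of such a component is joined to the
  `G`-vertex by an edge -/
  condG₃ : ∀ (a : Fin g) (u : Fin m ⊕ Fin n),
    Conn edge (.inl u) (.inr a) → edge (.inl u) (.inr a)
  /-- the number of components -/
  k : ℕ
  /-- the component classifier -/
  π : Vtx m n g → Fin k
  π_surj : Function.Surjective π
  π_eq : ∀ u v, π u = π v ↔ Conn edge u v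

namespace GGraph

variable {m n g : ℕ} {sL : Fin m → Bool} {sR : Fin n → Bool}

/-- component of the `i`-th left-hand argument place -/
def πL (Γ : GGraph m n g sL sR) (i : Fin m) : Fin Γ.k := Γ.π (.inl (.inl i))

/-- component of the `j`-th right-hand argument place -/
def πR (Γ : GGraph m n g sL sR) (j : Fin n) : Fin Γ.k := Γ.π (.inl (.inr j))

end GGraph

/-! ### Variance-indexed categories and g-dinaturality -/

/-- `B` or `Bᵒᵖ` according to a variance. -/
def VarCat (B : Type u) [Category.{v} B] : Bool → Type u
  | true => B
  | false => Bᵒᵖ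

instance (B : Type u) [Category.{v} B] : ∀ b, Category.{v} (VarCat B b)
  | true => (inferInstance : Category B)
  | false => (inferInstance : Category Bᵒᵖ)

variable {B : Type u} [Category.{v} B]

/-- The object of `B` or `Bᵒᵖ` with `P` at a positive argument place and `N` at a
negative one. -/
def pairObj : (b : Bool) → B → B → VarCat B b
  | true, P, _ => P
  | false, _, N => Opposite.op N

/-- The morphism with `u` at a positive argument place and `v` (contravariantly) at a
negative one. -/
def pairHom : (b : Bool) → {P P' N N' : B} → (P ⟶ P') → (N' ⟶ N) →
    (pairObj b P N ⟶ pairObj b P' N')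
  | true, _, _, _, _, u, _ => u
  | false, _, _, _, _, _, v => v.op

variable {ι : Type} {k : ℕ}

/-- The tuple of objects `⟨u,v⟩` with `u` in all positive and `v` in all negative
argument places. -/
@[reducible] def tupObj (s : ι → Bool) (P N : B) : ∀ i, VarCat B (s i) :=
  fun i => pairObj (s i) P N

/-- The corresponding tuple of morphisms. -/
def tupHom (s : ι → Bool) {P P' N N' : B} (u : P ⟶ P') (v : N' ⟶ N) :
    (tupObj s P N ⟶ tupObj s P' N') :=
  fun i => pairHom (s i) u v

/-- The diagonal-like tuple of objects determined by an assignment of objects to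
the components of a graph. -/
@[reducible] def diagObj (s : ι → Bool) (pl : ι → Fin k) (A : Fin k → B) :
    ∀ i, VarCat B (s i) :=
  fun i => pairObj (s i) (A (pl i)) (A (pl i))

/-- The tuple of objects obtained from the component assignment `A` by replacing the
value of component `c` by `P` at positive and `N` at negative argument places. -/
def hexObj (s : ι → Bool) (pl : ι → Fin k) (c : Fin k) (A : Fin k → B) (P N : B) :
    ∀ i, VarCat B (s i) :=
  fun i => if pl i = c then pairObj (s i) P N else pairObj (s i) (A (pl i)) (A (pl i))

/-- The corresponding tuple of morphisms (identities outside component `c`). -/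
def hexHom (s : ι → Bool) (pl : ι → Fin k) (c : Fin k) (A : Fin k → B)
    {P P' N N' : B} (u : P ⟶ P') (v : N' ⟶ N) :
    (hexObj s pl c A P N ⟶ hexObj s pl c A P' N') :=
  fun i => by
    unfold hexObj
    by_cases h : pl i = c
    · simp only [if_pos h]; exact pairHom (s i) u v
    · simp only [if_neg h]; exact 𝟙 _

/-- update of a component assignment -/
def updF {γ : Type*} (A : Fin k → γ) (c : Fin k) (X : γ) : Fin k → γ :=
  fun j => if j = c then X else A j

theorem diag_upd (s : ι → Bool) (pl : ι → Fin k) (c : Fin k) (A : Fin k → B) (X : B) :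
    diagObj s pl (updF A c X) = hexObj s pl c A X X := by
  funext i
  unfold diagObj hexObj updF
  by_cases h : pl i = c <;> simp [h]

/-- g-dinaturality of a transformation with respect to a graph: in every component
and for every morphism `f : P ⟶ Q` (all other components being kept fixed), the
g-dinaturality hexagon commutes. -/
def IsGDin {m n gΓ : ℕ} {sL : Fin m → Bool} {sR : Fin n → Bool}
    (Γ : GGraph m n gΓ sL sR)
    (T : (∀ i : Fin m, VarCat B (sL i)) ⥤ B)
    (S : (∀ j : Fin n, VarCat B (sR j)) ⥤ B)
    (α : ∀ A : Fin Γ.k → B, T.obj (diagObj sL Γ.πL A) ⟶ S.obj (diagObj sR Γ.πR A)) :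
    Prop :=
  ∀ (c : Fin Γ.k) (A : Fin Γ.k → B) (P Q : B) (f : P ⟶ Q),
    T.map (hexHom sL Γ.πL c A f (𝟙 Q)) ≫
      eqToHom (congrArg T.obj (diag_upd sL Γ.πL c A Q).symm) ≫
      α (updF A c Q) ≫
      eqToHom (congrArg S.obj (diag_upd sR Γ.πR c A Q)) ≫
      S.map (hexHom sR Γ.πR c A (𝟙 Q) f)
    = T.map (hexHom sL Γ.πL c A (𝟙 P) f) ≫
      eqToHom (congrArg T.obj (diag_upd sL Γ.πL c A P).symm) ≫
      α (updF A c P) ≫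
      eqToHom (congrArg S.obj (diag_upd sR Γ.πR c A P)) ≫
      S.map (hexHom sR Γ.πR c A f (𝟙 P))

/-- The g-dinaturality hexagon for a transformation whose graph has a single
component (so that only the signs of the argument places matter). -/
def SingleHex {ιx ιz : Type} (sx : ιx → Bool) (sz : ιz → Bool)
    (F : (∀ i : ιx, VarCat B (sx i)) ⥤ B) (H : (∀ l : ιz, VarCat B (sz l)) ⥤ B)
    (φ : ∀ A : B, F.obj (tupObj sx A A) ⟶ H.obj (tupObj sz A A)) : Prop :=
  ∀ (P Q : B) (f : P ⟶ Q),
    F.map (tupHom sx f (𝟙 Q)) ≫ φ Q ≫ H.map (tupHom sz (𝟙 Q) f)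
    = F.map (tupHom sx (𝟙 P) f) ≫ φ P ≫ H.map (tupHom sz f (𝟙 P))

section Amalg

variable {m n p gΦ gΨ : ℕ} {sx : Fin m → Bool} {sy : Fin n → Bool} {sz : Fin p → Bool}

/-- Vertices of the amalgamation `Φ+Ψ` of two graphs sharing their `y` argument
places. -/
abbrev AVtx (m n p gΦ gΨ : ℕ) := (Fin m ⊕ Fin n ⊕ Fin p) ⊕ (Fin gΦ ⊕ Fin gΨ)

/-- inclusion of the vertices of `Φ` into the amalgamation -/
def phiInc : Vtx m n gΦ → AVtx m n p gΦ gΨ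
  | .inl (.inl i) => .inl (.inl i)
  | .inl (.inr j) => .inl (.inr (.inl j))
  | .inr a => .inr (.inl a)

/-- inclusion of the vertices of `Ψ` into the amalgamation -/
def psiInc : Vtx n p gΨ → AVtx m n p gΦ gΨ
  | .inl (.inl j) => .inl (.inr (.inl j))
  | .inl (.inr l) => .inl (.inr (.inr l))
  | .inr a => .inr (.inr a)

/-- The edges of the amalgamation `Φ+Ψ`, tagged (`true` for `Φ`-edges, `false` for
`Ψ`-edges); the edge sets are kept disjoint via the tag. -/
def amEdge (Φ : GGraph m n gΦ sx sy) (Ψ : GGraph n p gΨ sy sz) :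
    Bool → AVtx m n p gΦ gΨ → AVtx m n p gΦ gΨ → Prop
  | true, u, v => ∃ u' v', Φ.edge u' v' ∧ phiInc u' = u ∧ phiInc v' = v
  | false, u, v => ∃ u' v', Ψ.edge u' v' ∧ psiInc u' = u ∧ psiInc v' = v

/-- `Φ+Ψ` has a single (connected) component. -/
def AmalgConnected (Φ : GGraph m n gΦ sx sy) (Ψ : GGraph n p gΨ sy sz) : Prop :=
  ∀ u v : AVtx m n p gΦ gΨ,
    Conn (fun a b => amEdge Φ Ψ true a b ∨ amEdge Φ Ψ false a b) u v

/-- There is an alternating loop in `Φ+Ψ`: a closed alternating chain, i.e. a cyclic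
sequence of vertices joined by edges of `Φ+Ψ` such that of any two adjacent edges one
belongs to `E_Φ` and the other to `E_Ψ`. -/
def HasAltLoop (Φ : GGraph m n gΦ sx sy) (Ψ : GGraph n p gΨ sy sz) : Prop :=
  ∃ (q : ℕ) (vs : ℕ → AVtx m n p gΦ gΨ) (sd : ℕ → Bool),
    0 < q ∧ vs 0 = vs q ∧
    (∀ t, t < q → amEdge Φ Ψ (sd t) (vs t) (vs (t + 1))) ∧
    (∀ t, t + 1 < q → sd t ≠ sd (t + 1))

/-- `Φ+Ψ` provides g-dinaturality: for every category, all functors of the types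
prescribed by the signs of the argument places and all g-dinatural `γ`, `δ` with
graphs `Φ`, `Ψ`, the composite family is g-dinatural with the (single-component)
composite graph `ΨΦ`, i.e. the composite hexagon commutes.  (For a
single-component graph, g-dinaturality depends only on the signs of the argument
places.) -/
def Provides (Φ : GGraph m n gΦ sx sy) (Ψ : GGraph n p gΨ sy sz) : Prop :=
  ∀ {B : Type u} [Category.{v} B]
    (F : (∀ i : Fin m, VarCat B (sx i)) ⥤ B)
    (G : (∀ j : Fin n, VarCat B (sy j)) ⥤ B)
    (H : (∀ l : Fin p, VarCat B (sz l)) ⥤ B)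
    (γ : ∀ A : Fin Φ.k → B, F.obj (diagObj sx Φ.πL A) ⟶ G.obj (diagObj sy Φ.πR A))
    (δ : ∀ A : Fin Ψ.k → B, G.obj (diagObj sy Ψ.πL A) ⟶ H.obj (diagObj sz Ψ.πR A)),
    IsGDin Φ F G γ → IsGDin Ψ G H δ →
    SingleHex sx sz F H (fun A => γ (fun _ => A) ≫ δ (fun _ => A))

end Amalg

/-! ### The free category `𝒟` of the equational class `𝒦_{Φ,Ψ}` -/

/-- Objects of `𝒟`: freely generated over `{A, C}` by an `m`-ary operation `T`,
an `n`-ary operation `S` and a `p`-ary operation `R`. -/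
inductive DObj (m n p : ℕ) : Type
  | A : DObj m n p
  | C : DObj m n p
  | T : (Fin m → DObj m n p) → DObj m n p
  | S : (Fin n → DObj m n p) → DObj m n p
  | R : (Fin p → DObj m n p) → DObj m n p

/-- source of a functor argument according to its variance -/
abbrev dSrc {γ : Type*} (b : Bool) (X Y : γ) : γ := cond b X Y
/-- target of a functor argument according to its variance -/
abbrev dTgt {γ : Type*} (b : Bool) (X Y : γ) : γ := cond b Y X

section DD

variable {m n p gΦ gΨ : ℕ} {sx : Fin m → Bool} {sy : Fin n → Bool} {sz : Fin p → Bool}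

/-- Morphism terms of the category `𝒟`, generated from `f : A → C`, the identities,
the generic g-dinatural transformations `α`, `β` and the operations `T`, `S`, `R`
(contravariant in their negative argument places). -/
inductive DTerm (Φ : GGraph m n gΦ sx sy) (Ψ : GGraph n p gΨ sy sz) :
    DObj m n p → DObj m n p → Type
  | f : DTerm Φ Ψ .A .C
  | id (X : DObj m n p) : DTerm Φ Ψ X X
  /-- composition, written in diagrammatic order -/
  | comp {X Y Z} : DTerm Φ Ψ X Y → DTerm Φ Ψ Y Z → DTerm Φ Ψ X Z
  | alpha (W : Fin Φ.k → DObj m n p) :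
      DTerm Φ Ψ (.T fun i => W (Φ.πL i)) (.S fun j => W (Φ.πR j))
  | beta (W : Fin Ψ.k → DObj m n p) :
      DTerm Φ Ψ (.S fun j => W (Ψ.πL j)) (.R fun l => W (Ψ.πR l))
  | mapT {X Y : Fin m → DObj m n p} :
      (∀ i, DTerm Φ Ψ (dSrc (sx i) (X i) (Y i)) (dTgt (sx i) (X i) (Y i))) →
      DTerm Φ Ψ (.T X) (.T Y)
  | mapS {X Y : Fin n → DObj m n p} :
      (∀ j, DTerm Φ Ψ (dSrc (sy j) (X j) (Y j)) (dTgt (sy j) (X j) (Y j))) →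
      DTerm Φ Ψ (.S X) (.S Y)
  | mapR {X Y : Fin p → DObj m n p} :
      (∀ l, DTerm Φ Ψ (dSrc (sz l) (X l) (Y l)) (dTgt (sz l) (X l) (Y l))) →
      DTerm Φ Ψ (.R X) (.R Y)

variable {Φ : GGraph m n gΦ sx sy} {Ψ : GGraph n p gΨ sy sz}

/-- composition of functor arguments, respecting variance -/
def dComp {X Y Z : DObj m n p} : (b : Bool) →
    DTerm Φ Ψ (dSrc b X Y) (dTgt b X Y) → DTerm Φ Ψ (dSrc b Y Z) (dTgt b Y Z) →
    DTerm Φ Ψ (dSrc b X Z) (dTgt b X Z)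
  | true, g, h => .comp g h
  | false, g, h => .comp h g

/-- identity as a functor argument -/
def dId (X : DObj m n p) : (b : Bool) → DTerm Φ Ψ (dSrc b X X) (dTgt b X X)
  | true => .id X
  | false => .id X

/-- the object tuple with `P` at the positive and `N` at the negative argument
places of component `i`, and the parameter `Z` elsewhere -/
def mixT {q k : ℕ} (pl : Fin q → Fin k) (s : Fin q → Bool) (i : Fin k)
    (Z : Fin k → DObj m n p) (P N : DObj m n p) : Fin q → DObj m n p :=
  fun j => if pl j = i then (cond (s j) P N) else Z (pl j)

section vecs
variable {q k : ℕ} (pl : Fin q → Fin k) (s : Fin q → Bool) (i : Fin k)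
  (Z : Fin k → DObj m n p) {X Y : DObj m n p} (t : DTerm Φ Ψ X Y)

/-- the argument vector `g` of the equation (α) (left-hand side, source functor):
`t` at the positive and `1_Y` at the negative argument places of component `i`,
identities elsewhere -/
def vecA : ∀ j, DTerm Φ Ψ (dSrc (s j) (mixT pl s i Z X Y j) (updF Z i Y (pl j)))
    (dTgt (s j) (mixT pl s i Z X Y j) (updF Z i Y (pl j))) := fun j => by
  unfold mixT updF
  by_cases h : pl j = i
  · simp only [if_pos h]
    cases hs : s j
    · exact .id Y
    · exact t
  · simp only [if_neg h]
    exact dId (Z (pl j)) (s j)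

/-- the argument vector `h` of the equation (α) (left-hand side, target functor) -/
def vecB : ∀ j, DTerm Φ Ψ (dSrc (s j) (updF Z i Y (pl j)) (mixT pl s i Z Y X j))
    (dTgt (s j) (updF Z i Y (pl j)) (mixT pl s i Z Y X j)) := fun j => by
  unfold mixT updF
  by_cases h : pl j = i
  · simp only [if_pos h]
    cases hs : s j
    · exact t
    · exact .id Y
  · simp only [if_neg h]
    exact dId (Z (pl j)) (s j)

/-- the argument vector `g'` of the equation (α) (right-hand side, source functor) -/
def vecC : ∀ j, DTerm Φ Ψ (dSrc (s j) (mixT pl s i Z X Y j) (updF Z i X (pl j)))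
    (dTgt (s j) (mixT pl s i Z X Y j) (updF Z i X (pl j))) := fun j => by
  unfold mixT updF
  by_cases h : pl j = i
  · simp only [if_pos h]
    cases hs : s j
    · exact t
    · exact .id X
  · simp only [if_neg h]
    exact dId (Z (pl j)) (s j)

/-- the argument vector `h'` of the equation (α) (right-hand side, target functor) -/
def vecD : ∀ j, DTerm Φ Ψ (dSrc (s j) (updF Z i X (pl j)) (mixT pl s i Z Y X j))
    (dTgt (s j) (updF Z i X (pl j)) (mixT pl s i Z Y X j)) := fun j => by
  unfold mixT updF
  by_cases h : pl j = i
  · simp only [if_pos h]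
    cases hs : s j
    · exact .id X
    · exact t
  · simp only [if_neg h]
    exact dId (Z (pl j)) (s j)

end vecs

/-- Equality of morphism terms of `𝒟`: the congruence generated by the
`𝒦_{Φ,Ψ}`-equations (categorial, functorial and g-dinatural equations). -/
inductive DEq : ∀ {X Y : DObj m n p}, DTerm Φ Ψ X Y → DTerm Φ Ψ X Y → Prop
  | refl {X Y} (g : DTerm Φ Ψ X Y) : DEq g g
  | symm {X Y} {g h : DTerm Φ Ψ X Y} : DEq g h → DEq h g
  | trans {X Y} {g h t : DTerm Φ Ψ X Y} : DEq g h → DEq h t → DEq g t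
  | comp_congr {X Y Z} {g g' : DTerm Φ Ψ X Y} {h h' : DTerm Φ Ψ Y Z} :
      DEq g g' → DEq h h' → DEq (.comp g h) (.comp g' h')
  | mapT_congr {X Y : Fin m → DObj m n p} {a b : ∀ i, DTerm Φ Ψ (dSrc (sx i) (X i) (Y i)) (dTgt (sx i) (X i) (Y i))} :
      (∀ i, DEq (a i) (b i)) → DEq (.mapT a) (.mapT b)
  | mapS_congr {X Y : Fin n → DObj m n p} {a b : ∀ j, DTerm Φ Ψ (dSrc (sy j) (X j) (Y j)) (dTgt (sy j) (X j) (Y j))} :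
      (∀ j, DEq (a j) (b j)) → DEq (.mapS a) (.mapS b)
  | mapR_congr {X Y : Fin p → DObj m n p} {a b : ∀ l, DTerm Φ Ψ (dSrc (sz l) (X l) (Y l)) (dTgt (sz l) (X l) (Y l))} :
      (∀ l, DEq (a l) (b l)) → DEq (.mapR a) (.mapR b)
  -- categorial equations
  | id_left {X Y} (g : DTerm Φ Ψ X Y) : DEq (.comp (.id X) g) g
  | id_right {X Y} (g : DTerm Φ Ψ X Y) : DEq (.comp g (.id Y)) g
  | assoc {X Y Z W} (g : DTerm Φ Ψ X Y) (h : DTerm Φ Ψ Y Z) (t : DTerm Φ Ψ Z W) :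
      DEq (.comp (.comp g h) t) (.comp g (.comp h t))
  -- functorial equations
  | functT {X Y Z : Fin m → DObj m n p}
      (a : ∀ i, DTerm Φ Ψ (dSrc (sx i) (X i) (Y i)) (dTgt (sx i) (X i) (Y i)))
      (b : ∀ i, DTerm Φ Ψ (dSrc (sx i) (Y i) (Z i)) (dTgt (sx i) (Y i) (Z i))) :
      DEq (.comp (.mapT a) (.mapT b)) (.mapT (fun i => dComp (sx i) (a i) (b i)))
  | functS {X Y Z : Fin n → DObj m n p}
      (a : ∀ j, DTerm Φ Ψ (dSrc (sy j) (X j) (Y j)) (dTgt (sy j) (X j) (Y j)))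
      (b : ∀ j, DTerm Φ Ψ (dSrc (sy j) (Y j) (Z j)) (dTgt (sy j) (Y j) (Z j))) :
      DEq (.comp (.mapS a) (.mapS b)) (.mapS (fun j => dComp (sy j) (a j) (b j)))
  | functR {X Y Z : Fin p → DObj m n p}
      (a : ∀ l, DTerm Φ Ψ (dSrc (sz l) (X l) (Y l)) (dTgt (sz l) (X l) (Y l)))
      (b : ∀ l, DTerm Φ Ψ (dSrc (sz l) (Y l) (Z l)) (dTgt (sz l) (Y l) (Z l))) :
      DEq (.comp (.mapR a) (.mapR b)) (.mapR (fun l => dComp (sz l) (a l) (b l)))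
  | functT_id (X : Fin m → DObj m n p) :
      DEq (.mapT (fun i => dId (X i) (sx i))) (.id (.T X))
  | functS_id (X : Fin n → DObj m n p) :
      DEq (.mapS (fun j => dId (X j) (sy j))) (.id (.S X))
  | functR_id (X : Fin p → DObj m n p) :
      DEq (.mapR (fun l => dId (X l) (sz l))) (.id (.R X))
  -- g-dinatural equations
  | alphaEq (i : Fin Φ.k) (Z : Fin Φ.k → DObj m n p) {X Y : DObj m n p}
      (t : DTerm Φ Ψ X Y) :
      DEq (.comp (.mapT (vecA Φ.πL sx i Z t))
            (.comp (.alpha (updF Z i Y)) (.mapS (vecB Φ.πR sy i Z t))))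
          (.comp (.mapT (vecC Φ.πL sx i Z t))
            (.comp (.alpha (updF Z i X)) (.mapS (vecD Φ.πR sy i Z t))))
  | betaEq (i : Fin Ψ.k) (Z : Fin Ψ.k → DObj m n p) {X Y : DObj m n p}
      (t : DTerm Φ Ψ X Y) :
      DEq (.comp (.mapS (vecA Ψ.πL sy i Z t))
            (.comp (.beta (updF Z i Y)) (.mapR (vecB Ψ.πR sz i Z t))))
          (.comp (.mapS (vecC Ψ.πL sy i Z t))
            (.comp (.beta (updF Z i X)) (.mapR (vecD Ψ.πR sz i Z t))))

end DD

section Nat0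
variable {m n p gΦ gΨ : ℕ} {sx : Fin m → Bool} {sy : Fin n → Bool} {sz : Fin p → Bool}
variable {Φ : GGraph m n gΦ sx sy} {Ψ : GGraph n p gΨ sy sz}

/-- the object `T⟨A,C⟩` -/
def TAC (sx : Fin m → Bool) : DObj m n p := .T fun i => cond (sx i) .A .C
/-- the object `R⟨C,A⟩` -/
def RCA (sz : Fin p → Bool) : DObj m n p := .R fun l => cond (sz l) .C .A

/-- the argument vector of `T⟨f,1_C⟩ : T⟨A,C⟩ → T(C,…,C)` -/
def gvecC : ∀ i, DTerm Φ Ψ (dSrc (sx i) (cond (sx i) DObj.A DObj.C) DObj.C)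
    (dTgt (sx i) (cond (sx i) DObj.A DObj.C) DObj.C) := fun i => by
  cases hs : sx i
  · exact .id .C
  · exact .f

/-- the argument vector of `T⟨1_A,f⟩ : T⟨A,C⟩ → T(A,…,A)` -/
def gvecA : ∀ i, DTerm Φ Ψ (dSrc (sx i) (cond (sx i) DObj.A DObj.C) DObj.A)
    (dTgt (sx i) (cond (sx i) DObj.A DObj.C) DObj.A) := fun i => by
  cases hs : sx i
  · exact .f
  · exact .id .A

/-- the argument vector of `R⟨1_C,f⟩ : R(C,…,C) → R⟨C,A⟩` -/
def rvecC : ∀ l, DTerm Φ Ψ (dSrc (sz l) DObj.C (cond (sz l) DObj.C DObj.A))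
    (dTgt (sz l) DObj.C (cond (sz l) DObj.C DObj.A)) := fun l => by
  cases hs : sz l
  · exact .f
  · exact .id .C

/-- the argument vector of `R⟨f,1_A⟩ : R(A,…,A) → R⟨C,A⟩` -/
def rvecA : ∀ l, DTerm Φ Ψ (dSrc (sz l) DObj.A (cond (sz l) DObj.C DObj.A))
    (dTgt (sz l) DObj.A (cond (sz l) DObj.C DObj.A)) := fun l => by
  cases hs : sz l
  · exact .id .A
  · exact .f

/-- the left-hand side of the equation `(nat)`:
`R⟨1_C,f⟩ ∘ β(C,…,C) ∘ α(C,…,C) ∘ T⟨f,1_C⟩` (written diagrammatically) -/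
def natLHS (Φ : GGraph m n gΦ sx sy) (Ψ : GGraph n p gΨ sy sz) :
    DTerm Φ Ψ (TAC sx) (RCA sz) :=
  .comp (.mapT gvecC)
    (.comp (.alpha fun _ => .C) (.comp (.beta fun _ => .C) (.mapR rvecC)))

/-- the right-hand side of the equation `(nat)`:
`R⟨f,1_A⟩ ∘ β(A,…,A) ∘ α(A,…,A) ∘ T⟨1_A,f⟩` -/
def natRHS (Φ : GGraph m n gΦ sx sy) (Ψ : GGraph n p gΨ sy sz) :
    DTerm Φ Ψ (TAC sx) (RCA sz) :=
  .comp (.mapT gvecA)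
    (.comp (.alpha fun _ => .A) (.comp (.beta fun _ => .A) (.mapR rvecA)))

end Nat0

/-! ### Auxiliary material for the proof -/

set_option linter.unusedSimpArgs false
set_option linter.unusedSectionVars false

section Aux

/-- value of an interpretation on a functor argument -/
def vmk {m n p : ℕ} {B : Type u} [Category.{v} B] (o : DObj m n p → B) :
    (b : Bool) → {X Y : DObj m n p} → (o (dSrc b X Y) ⟶ o (dTgt b X Y)) →
    (pairObj b (o X) (o X) ⟶ pairObj b (o Y) (o Y))
  | true, _, _, g => g
  | false, _, _, g => g.op

/-- tuple of functor arguments in an interpretation -/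
def vtup {m n p : ℕ} {B : Type u} [Category.{v} B] (o : DObj m n p → B) {q : ℕ}
    (s : Fin q → Bool) {X Y : Fin q → DObj m n p}
    (a : ∀ j, o (dSrc (s j) (X j) (Y j)) ⟶ o (dTgt (s j) (X j) (Y j))) :
    (show ∀ j, VarCat B (s j) from fun j => pairObj (s j) (o (X j)) (o (X j))) ⟶
      (fun j => pairObj (s j) (o (Y j)) (o (Y j))) :=
  fun j => vmk o (s j) (a j)

theorem pi_heq {B : Type u} [Category.{v} B] {ι : Type} {s : ι → Bool}
    {X X' Y Y' : ∀ i, VarCat B (s i)} (hX : X = X') (hY : Y = Y')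
    (a : X ⟶ Y) (a' : X' ⟶ Y') (h : ∀ i, HEq (a i) (a' i)) : HEq a a' := by
  subst hX hY
  apply heq_of_eq
  funext i
  exact eq_of_heq (h i)

theorem map_heq {D : Type*} [Category D] {B : Type*} [Category B] (T : D ⥤ B)
    {X X' Y Y' : D} (hX : X = X') (hY : Y = Y')
    {a : X ⟶ Y} {a' : X' ⟶ Y'} (h : HEq a a') : HEq (T.map a) (T.map a') := by
  subst hX hY
  cases h
  rfl

theorem comp3_heq {B : Type*} [Category B] {X Y Z W X' Y' Z' W' : B}
    (hX : X = X') (hY : Y = Y') (hZ : Z = Z') (hW : W = W')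
    {a : X ⟶ Y} {b : Y ⟶ Z} {c : Z ⟶ W} {a' : X' ⟶ Y'} {b' : Y' ⟶ Z'} {c' : Z' ⟶ W'}
    (ha : HEq a a') (hb : HEq b b') (hc : HEq c c') :
    HEq (a ≫ b ≫ c) (a' ≫ b' ≫ c') := by
  subst hX hY hZ hW
  cases ha; cases hb; cases hc
  rfl

theorem comp5_heq {B : Type*} [Category B] {X Y Z W X' Y' Z' W' : B}
    (hX : X = X') (hY : Y = Y') (hZ : Z = Z') (hW : W = W')
    {a : X ⟶ Y} {b : Y' ⟶ Z'} {c : Z ⟶ W} {a' : X' ⟶ Y'} {b' : Y' ⟶ Z'} {c' : Z' ⟶ W'}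
    (ha : HEq a a') (hb : b = b') (hc : HEq c c') :
    HEq (a ≫ eqToHom hY ≫ b ≫ eqToHom hZ.symm ≫ c) (a' ≫ b' ≫ c') := by
  subst hX hY hZ hW
  cases ha; cases hb; cases hc
  simp

theorem hex_iff {B : Type u} [Category.{v} B]
    {m n gΓ : ℕ} {sL : Fin m → Bool} {sR : Fin n → Bool}
    (Γ : GGraph m n gΓ sL sR)
    (T : (∀ i : Fin m, VarCat B (sL i)) ⥤ B)
    (S : (∀ j : Fin n, VarCat B (sR j)) ⥤ B)
    (α : ∀ A : Fin Γ.k → B, T.obj (diagObj sL Γ.πL A) ⟶ S.obj (diagObj sR Γ.πR A))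
    (c : Fin Γ.k) (A : Fin Γ.k → B) (P Q : B) (f : P ⟶ Q)
    (AP AQ : Fin Γ.k → B) (hP : AP = updF A c P) (hQ : AQ = updF A c Q)
    (U : ∀ i : Fin m, VarCat B (sL i)) (V : ∀ i : Fin n, VarCat B (sR i))
    (hU : U = hexObj sL Γ.πL c A P Q) (hV : V = hexObj sR Γ.πR c A Q P)
    (a₁ : U ⟶ diagObj sL Γ.πL AQ) (b₁ : diagObj sR Γ.πR AQ ⟶ V)
    (a₂ : U ⟶ diagObj sL Γ.πL AP) (b₂ : diagObj sR Γ.πR AP ⟶ V)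
    (ha₁ : HEq a₁ (hexHom sL Γ.πL c A f (𝟙 Q)))
    (hb₁ : HEq b₁ (hexHom sR Γ.πR c A (𝟙 Q) f))
    (ha₂ : HEq a₂ (hexHom sL Γ.πL c A (𝟙 P) f))
    (hb₂ : HEq b₂ (hexHom sR Γ.πR c A f (𝟙 P))) :
    (T.map (hexHom sL Γ.πL c A f (𝟙 Q)) ≫
      eqToHom (congrArg T.obj (diag_upd sL Γ.πL c A Q).symm) ≫
      α (updF A c Q) ≫
      eqToHom (congrArg S.obj (diag_upd sR Γ.πR c A Q)) ≫
      S.map (hexHom sR Γ.πR c A (𝟙 Q) f)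
    = T.map (hexHom sL Γ.πL c A (𝟙 P) f) ≫
      eqToHom (congrArg T.obj (diag_upd sL Γ.πL c A P).symm) ≫
      α (updF A c P) ≫
      eqToHom (congrArg S.obj (diag_upd sR Γ.πR c A P)) ≫
      S.map (hexHom sR Γ.πR c A f (𝟙 P))) ↔
    T.map a₁ ≫ α AQ ≫ S.map b₁ = T.map a₂ ≫ α AP ≫ S.map b₂ := by
  subst hP hQ hU hV
  have e₁ := comp5_heq (b := α (updF A c Q)) rfl
    (congrArg T.obj (diag_upd sL Γ.πL c A Q).symm)
    (congrArg S.obj (diag_upd sR Γ.πR c A Q).symm) rfl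
    (map_heq T rfl (diag_upd sL Γ.πL c A Q).symm ha₁.symm) rfl
    (map_heq S (diag_upd sR Γ.πR c A Q).symm rfl hb₁.symm)
  have e₂ := comp5_heq (b := α (updF A c P)) rfl
    (congrArg T.obj (diag_upd sL Γ.πL c A P).symm)
    (congrArg S.obj (diag_upd sR Γ.πR c A P).symm) rfl
    (map_heq T rfl (diag_upd sL Γ.πL c A P).symm ha₂.symm) rfl
    (map_heq S (diag_upd sR Γ.πR c A P).symm rfl hb₂.symm)
  rw [eq_of_heq e₁, eq_of_heq e₂]

theorem hexHom_pos {B : Type u} [Category.{v} B] {ι : Type} {k : ℕ}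
    (s : ι → Bool) (pl : ι → Fin k) (c : Fin k) (A : Fin k → B)
    {P P' N N' : B} (u : P ⟶ P') (w : N' ⟶ N) (i : ι) (hi : pl i = c) :
    HEq (hexHom s pl c A u w i) (pairHom (s i) u w) := by
  unfold hexHom
  simp only [hi, ↓reduceDIte, id]
  exact cast_heq _ _

theorem hexHom_neg {B : Type u} [Category.{v} B] {ι : Type} {k : ℕ}
    (s : ι → Bool) (pl : ι → Fin k) (c : Fin k) (A : Fin k → B)
    {P P' N N' : B} (u : P ⟶ P') (w : N' ⟶ N) (i : ι) (hi : ¬ pl i = c) :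
    HEq (hexHom s pl c A u w i) (𝟙 (pairObj (s i) (A (pl i)) (A (pl i)))) := by
  unfold hexHom
  simp only [hi, ↓reduceDIte, id]
  exact cast_heq _ _

end Aux

section Interp

variable {m n p gΦ gΨ : ℕ} {sx : Fin m → Bool} {sy : Fin n → Bool} {sz : Fin p → Bool}
variable {Φ : GGraph m n gΦ sx sy} {Ψ : GGraph n p gΨ sy sz}

section vecs
variable {q k : ℕ} (pl : Fin q → Fin k) (s : Fin q → Bool) (i : Fin k)
  (Z : Fin k → DObj m n p) {X Y : DObj m n p} (t : DTerm Φ Ψ X Y) (j : Fin q)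

theorem vecA_t (h : pl j = i) (hs : s j = true) : HEq (vecA pl s i Z t j) t := by
  unfold vecA
  simp only [h, ↓reduceDIte, id]
  refine (cast_heq _ _).trans ?_
  generalize_proofs
  generalize s j = b at *
  subst hs
  rfl

theorem vecA_id (h : pl j = i) (hs : s j = false) : HEq (vecA pl s i Z t j) (DTerm.id (Φ := Φ) (Ψ := Ψ) Y) := by
  unfold vecA
  simp only [h, ↓reduceDIte, id]
  refine (cast_heq _ _).trans ?_
  generalize_proofs
  generalize s j = b at *
  subst hs
  rfl

theorem vecA_ne (h : ¬ pl j = i) :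
    HEq (vecA pl s i Z t j) (dId (Φ := Φ) (Ψ := Ψ) (Z (pl j)) (s j)) := by
  unfold vecA
  simp only [h, ↓reduceDIte, id]
  exact cast_heq _ _

theorem vecB_t (h : pl j = i) (hs : s j = false) : HEq (vecB pl s i Z t j) t := by
  unfold vecB
  simp only [h, ↓reduceDIte, id]
  refine (cast_heq _ _).trans ?_
  generalize_proofs
  generalize s j = b at *
  subst hs
  rfl

theorem vecB_id (h : pl j = i) (hs : s j = true) : HEq (vecB pl s i Z t j) (DTerm.id (Φ := Φ) (Ψ := Ψ) Y) := by
  unfold vecB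
  simp only [h, ↓reduceDIte, id]
  refine (cast_heq _ _).trans ?_
  generalize_proofs
  generalize s j = b at *
  subst hs
  rfl

theorem vecB_ne (h : ¬ pl j = i) :
    HEq (vecB pl s i Z t j) (dId (Φ := Φ) (Ψ := Ψ) (Z (pl j)) (s j)) := by
  unfold vecB
  simp only [h, ↓reduceDIte, id]
  exact cast_heq _ _

theorem vecC_t (h : pl j = i) (hs : s j = false) : HEq (vecC pl s i Z t j) t := by
  unfold vecC
  simp only [h, ↓reduceDIte, id]
  refine (cast_heq _ _).trans ?_
  generalize_proofs
  generalize s j = b at *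
  subst hs
  rfl

theorem vecC_id (h : pl j = i) (hs : s j = true) : HEq (vecC pl s i Z t j) (DTerm.id (Φ := Φ) (Ψ := Ψ) X) := by
  unfold vecC
  simp only [h, ↓reduceDIte, id]
  refine (cast_heq _ _).trans ?_
  generalize_proofs
  generalize s j = b at *
  subst hs
  rfl

theorem vecC_ne (h : ¬ pl j = i) :
    HEq (vecC pl s i Z t j) (dId (Φ := Φ) (Ψ := Ψ) (Z (pl j)) (s j)) := by
  unfold vecC
  simp only [h, ↓reduceDIte, id]
  exact cast_heq _ _

theorem vecD_t (h : pl j = i) (hs : s j = true) : HEq (vecD pl s i Z t j) t := by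
  unfold vecD
  simp only [h, ↓reduceDIte, id]
  refine (cast_heq _ _).trans ?_
  generalize_proofs
  generalize s j = b at *
  subst hs
  rfl

theorem vecD_id (h : pl j = i) (hs : s j = false) : HEq (vecD pl s i Z t j) (DTerm.id (Φ := Φ) (Ψ := Ψ) X) := by
  unfold vecD
  simp only [h, ↓reduceDIte, id]
  refine (cast_heq _ _).trans ?_
  generalize_proofs
  generalize s j = b at *
  subst hs
  rfl

theorem vecD_ne (h : ¬ pl j = i) :
    HEq (vecD pl s i Z t j) (dId (Φ := Φ) (Ψ := Ψ) (Z (pl j)) (s j)) := by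
  unfold vecD
  simp only [h, ↓reduceDIte, id]
  exact cast_heq _ _

end vecs

section sem

variable {B : Type u} [Category.{v} B] (o : DObj m n p → B)
  (h : ∀ {X Y : DObj m n p}, DTerm Φ Ψ X Y → (o X ⟶ o Y))

theorem vmk_pos (b : Bool) (hb : b = true) {X Y X' Y' : DObj m n p} (hX : X = X') (hY : Y = Y')
    (t₀ : DTerm Φ Ψ (dSrc b X Y) (dTgt b X Y)) (t : DTerm Φ Ψ X' Y') (ht : HEq t₀ t)
    (g : o X' ⟶ o Y') (hg : h t = g) {N N' : B} (w : N' ⟶ N) :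
    HEq (vmk o b (h t₀)) (pairHom b g w) := by
  subst hb hX hY hg
  cases ht
  rfl

theorem vmk_neg (b : Bool) (hb : b = false) {X Y X' Y' : DObj m n p} (hX : X = X') (hY : Y = Y')
    (t₀ : DTerm Φ Ψ (dSrc b X Y) (dTgt b X Y)) (t : DTerm Φ Ψ Y' X') (ht : HEq t₀ t)
    (g : o Y' ⟶ o X') (hg : h t = g) {N N' : B} (w : N ⟶ N') :
    HEq (vmk o b (h t₀)) (pairHom b w g) := by
  subst hb hX hY hg
  cases ht
  rfl

theorem vmk_dId (hid : ∀ X, h (.id X) = 𝟙 (o X)) (b : Bool) (X : DObj m n p) :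
    vmk o b (h (dId X b)) = 𝟙 (pairObj b (o X) (o X)) := by
  cases b
  · exact congrArg Quiver.Hom.op (hid X)
  · exact hid X

theorem vmk_ne (hid : ∀ X, h (.id X) = 𝟙 (o X))
    (b : Bool) {X Y X' : DObj m n p} (hX : X = X') (hY : Y = X')
    (t₀ : DTerm Φ Ψ (dSrc b X Y) (dTgt b X Y)) (ht : HEq t₀ (dId (Φ := Φ) (Ψ := Ψ) X' b)) :
    HEq (vmk o b (h t₀)) (𝟙 (pairObj b (o X') (o X'))) := by
  subst hX hY
  cases ht
  rw [vmk_dId o h hid]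

theorem vmk_dComp (hc : ∀ {X Y Z} (a : DTerm Φ Ψ X Y) (b : DTerm Φ Ψ Y Z),
      h (.comp a b) = h a ≫ h b) (b : Bool) {X Y Z : DObj m n p}
    (t₁ : DTerm Φ Ψ (dSrc b X Y) (dTgt b X Y)) (t₂ : DTerm Φ Ψ (dSrc b Y Z) (dTgt b Y Z)) :
    vmk o b (h (dComp b t₁ t₂)) = vmk o b (h t₁) ≫ vmk o b (h t₂) := by
  cases b
  · exact congrArg Quiver.Hom.op (hc t₂ t₁)
  · exact hc t₁ t₂

variable {q k : ℕ} (pl : Fin q → Fin k) (s : Fin q → Bool) (i : Fin k)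
  (Z : Fin k → DObj m n p) {X Y : DObj m n p} (t : DTerm Φ Ψ X Y)

theorem mix_hexObj (P N : DObj m n p) :
    (fun j => pairObj (s j) (o (mixT pl s i Z P N j)) (o (mixT pl s i Z P N j))) =
      hexObj s pl i (fun c => o (Z c)) (o P) (o N) := by
  funext j
  unfold mixT hexObj
  by_cases hj : pl j = i
  · simp only [hj, if_true]
    cases s j <;> rfl
  · simp only [hj, if_false]

theorem o_updF (W : DObj m n p) :
    (fun c => o (updF Z i W c)) = updF (fun c => o (Z c)) i (o W) := by
  funext c
  unfold updF
  split <;> rfl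

theorem upd_hexObj (W : DObj m n p) :
    diagObj s pl (fun c => o (updF Z i W c)) =
      hexObj s pl i (fun c => o (Z c)) (o W) (o W) := by
  rw [o_updF, diag_upd]

theorem vecA_hex (hid : ∀ X, h (.id X) = 𝟙 (o X)) :
    HEq (vtup o s (X := (mixT pl s i Z X Y)) (Y := (fun j => updF Z i Y (pl j)))
        fun j => h (vecA pl s i Z t j))
      (hexHom s pl i (fun c => o (Z c)) (h t) (𝟙 (o Y))) := by
  refine pi_heq (mix_hexObj o pl s i Z _ _) (upd_hexObj o pl s i Z _) _ _ ?_
  intro j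
  by_cases hj : pl j = i
  · refine HEq.trans ?_ (hexHom_pos _ _ _ _ _ _ _ hj).symm
    obtain hs | hs : s j = false ∨ s j = true := (s j).eq_false_or_eq_true.symm
    · exact vmk_neg o h (s j) hs (by simp [mixT, updF, hj, hs]) (by simp [mixT, updF, hj, hs]) _ _
        (vecA_id pl s i Z t j hj hs) _ (hid _) _
    · exact vmk_pos o h (s j) hs (by simp [mixT, updF, hj, hs]) (by simp [mixT, updF, hj, hs]) _ _
        (vecA_t pl s i Z t j hj hs) _ rfl _
  · refine HEq.trans ?_ (hexHom_neg _ _ _ _ _ _ _ hj).symm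
    exact vmk_ne o h hid (s j) (by simp [mixT, updF, hj]) (by simp [mixT, updF, hj]) _
      (vecA_ne pl s i Z t j hj)

theorem vecB_hex (hid : ∀ X, h (.id X) = 𝟙 (o X)) :
    HEq (vtup o s (X := (fun j => updF Z i Y (pl j))) (Y := (mixT pl s i Z Y X))
        fun j => h (vecB pl s i Z t j))
      (hexHom s pl i (fun c => o (Z c)) (𝟙 (o Y)) (h t)) := by
  refine pi_heq (upd_hexObj o pl s i Z _) (mix_hexObj o pl s i Z _ _) _ _ ?_
  intro j
  by_cases hj : pl j = i
  · refine HEq.trans ?_ (hexHom_pos _ _ _ _ _ _ _ hj).symm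
    obtain hs | hs : s j = false ∨ s j = true := (s j).eq_false_or_eq_true.symm
    · exact vmk_neg o h (s j) hs (by simp [mixT, updF, hj, hs]) (by simp [mixT, updF, hj, hs]) _ _
        (vecB_t pl s i Z t j hj hs) _ rfl _
    · exact vmk_pos o h (s j) hs (by simp [mixT, updF, hj, hs]) (by simp [mixT, updF, hj, hs]) _ _
        (vecB_id pl s i Z t j hj hs) _ (hid _) _
  · refine HEq.trans ?_ (hexHom_neg _ _ _ _ _ _ _ hj).symm
    exact vmk_ne o h hid (s j) (by simp [mixT, updF, hj]) (by simp [mixT, updF, hj]) _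
      (vecB_ne pl s i Z t j hj)

theorem vecC_hex (hid : ∀ X, h (.id X) = 𝟙 (o X)) :
    HEq (vtup o s (X := (mixT pl s i Z X Y)) (Y := (fun j => updF Z i X (pl j)))
        fun j => h (vecC pl s i Z t j))
      (hexHom s pl i (fun c => o (Z c)) (𝟙 (o X)) (h t)) := by
  refine pi_heq (mix_hexObj o pl s i Z _ _) (upd_hexObj o pl s i Z _) _ _ ?_
  intro j
  by_cases hj : pl j = i
  · refine HEq.trans ?_ (hexHom_pos _ _ _ _ _ _ _ hj).symm
    obtain hs | hs : s j = false ∨ s j = true := (s j).eq_false_or_eq_true.symm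
    · exact vmk_neg o h (s j) hs (by simp [mixT, updF, hj, hs]) (by simp [mixT, updF, hj, hs]) _ _
        (vecC_t pl s i Z t j hj hs) _ rfl _
    · exact vmk_pos o h (s j) hs (by simp [mixT, updF, hj, hs]) (by simp [mixT, updF, hj, hs]) _ _
        (vecC_id pl s i Z t j hj hs) _ (hid _) _
  · refine HEq.trans ?_ (hexHom_neg _ _ _ _ _ _ _ hj).symm
    exact vmk_ne o h hid (s j) (by simp [mixT, updF, hj]) (by simp [mixT, updF, hj]) _
      (vecC_ne pl s i Z t j hj)

theorem vecD_hex (hid : ∀ X, h (.id X) = 𝟙 (o X)) :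
    HEq (vtup o s (X := (fun j => updF Z i X (pl j))) (Y := (mixT pl s i Z Y X))
        fun j => h (vecD pl s i Z t j))
      (hexHom s pl i (fun c => o (Z c)) (h t) (𝟙 (o X))) := by
  refine pi_heq (upd_hexObj o pl s i Z _) (mix_hexObj o pl s i Z _ _) _ _ ?_
  intro j
  by_cases hj : pl j = i
  · refine HEq.trans ?_ (hexHom_pos _ _ _ _ _ _ _ hj).symm
    obtain hs | hs : s j = false ∨ s j = true := (s j).eq_false_or_eq_true.symm
    · exact vmk_neg o h (s j) hs (by simp [mixT, updF, hj, hs]) (by simp [mixT, updF, hj, hs]) _ _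
        (vecD_id pl s i Z t j hj hs) _ (hid _) _
    · exact vmk_pos o h (s j) hs (by simp [mixT, updF, hj, hs]) (by simp [mixT, updF, hj, hs]) _ _
        (vecD_t pl s i Z t j hj hs) _ rfl _
  · refine HEq.trans ?_ (hexHom_neg _ _ _ _ _ _ _ hj).symm
    exact vmk_ne o h hid (s j) (by simp [mixT, updF, hj]) (by simp [mixT, updF, hj]) _
      (vecD_ne pl s i Z t j hj)


theorem cond_tupObj (s : Fin q → Bool) (P N : DObj m n p) :
    (fun j => pairObj (s j) (o (cond (s j) P N)) (o (cond (s j) P N))) =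
      tupObj s (o P) (o N) := by
  funext j
  unfold tupObj
  cases s j <;> rfl

theorem gvecC_t (j : Fin m) (hs : sx j = true) :
    HEq (gvecC (Φ := Φ) (Ψ := Ψ) j) (DTerm.f (Φ := Φ) (Ψ := Ψ)) := by
  unfold gvecC
  generalize_proofs
  generalize sx j = b at *
  subst hs
  rfl

theorem gvecC_id (j : Fin m) (hs : sx j = false) :
    HEq (gvecC (Φ := Φ) (Ψ := Ψ) j) (DTerm.id (Φ := Φ) (Ψ := Ψ) .C) := by
  unfold gvecC
  generalize_proofs
  generalize sx j = b at *
  subst hs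
  rfl

theorem gvecC_tup (hid : ∀ X, h (.id X) = 𝟙 (o X)) :
    HEq (vtup o sx (X := (fun i => cond (sx i) DObj.A DObj.C)) (Y := (fun _ => DObj.C))
        fun j => h (gvecC (Φ := Φ) (Ψ := Ψ) j))
      (tupHom sx (h (X := .A) (Y := .C) .f) (𝟙 (o .C))) := by
  refine pi_heq (cond_tupObj o _ _ _) (rfl) _ _ ?_
  intro j
  obtain hs | hs : sx j = false ∨ sx j = true := (sx j).eq_false_or_eq_true.symm
  · exact vmk_neg o h (sx j) hs (by simp [hs]) (by simp [hs]) _ _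
      (gvecC_id j hs) _ (hid _) _
  · exact vmk_pos o h (sx j) hs (by simp [hs]) (by simp [hs]) _ _
      (gvecC_t j hs) _ rfl _

theorem gvecA_t (j : Fin m) (hs : sx j = false) :
    HEq (gvecA (Φ := Φ) (Ψ := Ψ) j) (DTerm.f (Φ := Φ) (Ψ := Ψ)) := by
  unfold gvecA
  generalize_proofs
  generalize sx j = b at *
  subst hs
  rfl

theorem gvecA_id (j : Fin m) (hs : sx j = true) :
    HEq (gvecA (Φ := Φ) (Ψ := Ψ) j) (DTerm.id (Φ := Φ) (Ψ := Ψ) .A) := by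
  unfold gvecA
  generalize_proofs
  generalize sx j = b at *
  subst hs
  rfl

theorem gvecA_tup (hid : ∀ X, h (.id X) = 𝟙 (o X)) :
    HEq (vtup o sx (X := (fun i => cond (sx i) DObj.A DObj.C)) (Y := (fun _ => DObj.A))
        fun j => h (gvecA (Φ := Φ) (Ψ := Ψ) j))
      (tupHom sx (𝟙 (o .A)) (h (X := .A) (Y := .C) .f)) := by
  refine pi_heq (cond_tupObj o _ _ _) (rfl) _ _ ?_
  intro j
  obtain hs | hs : sx j = false ∨ sx j = true := (sx j).eq_false_or_eq_true.symm
  · exact vmk_neg o h (sx j) hs (by simp [hs]) (by simp [hs]) _ _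
      (gvecA_t j hs) _ rfl _
  · exact vmk_pos o h (sx j) hs (by simp [hs]) (by simp [hs]) _ _
      (gvecA_id j hs) _ (hid _) _

theorem rvecC_t (j : Fin p) (hs : sz j = false) :
    HEq (rvecC (Φ := Φ) (Ψ := Ψ) j) (DTerm.f (Φ := Φ) (Ψ := Ψ)) := by
  unfold rvecC
  generalize_proofs
  generalize sz j = b at *
  subst hs
  rfl

theorem rvecC_id (j : Fin p) (hs : sz j = true) :
    HEq (rvecC (Φ := Φ) (Ψ := Ψ) j) (DTerm.id (Φ := Φ) (Ψ := Ψ) .C) := by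
  unfold rvecC
  generalize_proofs
  generalize sz j = b at *
  subst hs
  rfl

theorem rvecC_tup (hid : ∀ X, h (.id X) = 𝟙 (o X)) :
    HEq (vtup o sz (X := (fun _ => DObj.C)) (Y := (fun i => cond (sz i) DObj.C DObj.A))
        fun j => h (rvecC (Φ := Φ) (Ψ := Ψ) j))
      (tupHom sz (𝟙 (o .C)) (h (X := .A) (Y := .C) .f)) := by
  refine pi_heq (rfl) (cond_tupObj o _ _ _) _ _ ?_
  intro j
  obtain hs | hs : sz j = false ∨ sz j = true := (sz j).eq_false_or_eq_true.symm
  · exact vmk_neg o h (sz j) hs (by simp [hs]) (by simp [hs]) _ _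
      (rvecC_t j hs) _ rfl _
  · exact vmk_pos o h (sz j) hs (by simp [hs]) (by simp [hs]) _ _
      (rvecC_id j hs) _ (hid _) _

theorem rvecA_t (j : Fin p) (hs : sz j = true) :
    HEq (rvecA (Φ := Φ) (Ψ := Ψ) j) (DTerm.f (Φ := Φ) (Ψ := Ψ)) := by
  unfold rvecA
  generalize_proofs
  generalize sz j = b at *
  subst hs
  rfl

theorem rvecA_id (j : Fin p) (hs : sz j = false) :
    HEq (rvecA (Φ := Φ) (Ψ := Ψ) j) (DTerm.id (Φ := Φ) (Ψ := Ψ) .A) := by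
  unfold rvecA
  generalize_proofs
  generalize sz j = b at *
  subst hs
  rfl

theorem rvecA_tup (hid : ∀ X, h (.id X) = 𝟙 (o X)) :
    HEq (vtup o sz (X := (fun _ => DObj.A)) (Y := (fun i => cond (sz i) DObj.C DObj.A))
        fun j => h (rvecA (Φ := Φ) (Ψ := Ψ) j))
      (tupHom sz (h (X := .A) (Y := .C) .f) (𝟙 (o .A))) := by
  refine pi_heq (rfl) (cond_tupObj o _ _ _) _ _ ?_
  intro j
  obtain hs | hs : sz j = false ∨ sz j = true := (sz j).eq_false_or_eq_true.symm
  · exact vmk_neg o h (sz j) hs (by simp [hs]) (by simp [hs]) _ _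
      (rvecA_id j hs) _ (hid _) _
  · exact vmk_pos o h (sz j) hs (by simp [hs]) (by simp [hs]) _ _
      (rvecA_t j hs) _ rfl _

end sem
end Interp

section Sound

variable {m n p gΦ gΨ : ℕ} {sx : Fin m → Bool} {sy : Fin n → Bool} {sz : Fin p → Bool}
variable (Φ : GGraph m n gΦ sx sy) (Ψ : GGraph n p gΨ sy sz)
variable {B : Type u} [Category.{v} B]
    (F : (∀ i : Fin m, VarCat B (sx i)) ⥤ B)
    (G : (∀ j : Fin n, VarCat B (sy j)) ⥤ B)
    (H : (∀ l : Fin p, VarCat B (sz l)) ⥤ B)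
    (γ : ∀ A : Fin Φ.k → B, F.obj (diagObj sx Φ.πL A) ⟶ G.obj (diagObj sy Φ.πR A))
    (δ : ∀ A : Fin Ψ.k → B, G.obj (diagObj sy Ψ.πL A) ⟶ H.obj (diagObj sz Ψ.πR A))
    {P Q : B} (f : P ⟶ Q)

/-- interpretation of the objects of `𝒟` -/
def iO (P Q : B) : DObj m n p → B
  | .A => P
  | .C => Q
  | .T X => F.obj (fun i => pairObj (sx i) (iO P Q (X i)) (iO P Q (X i)))
  | .S X => G.obj (fun i => pairObj (sy i) (iO P Q (X i)) (iO P Q (X i)))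
  | .R X => H.obj (fun i => pairObj (sz i) (iO P Q (X i)) (iO P Q (X i)))

/-- interpretation of the morphism terms of `𝒟` -/
def iH : {X Y : DObj m n p} → DTerm Φ Ψ X Y → (iO F G H P Q X ⟶ iO F G H P Q Y)
  | _, _, .f => f
  | _, _, .id _ => 𝟙 _
  | _, _, .comp a b => iH a ≫ iH b
  | _, _, .alpha W => γ (fun c => iO F G H P Q (W c))
  | _, _, .beta W => δ (fun c => iO F G H P Q (W c))
  | _, _, .mapT a => F.map (vtup (iO F G H P Q) sx fun i => iH (a i))
  | _, _, .mapS a => G.map (vtup (iO F G H P Q) sy fun i => iH (a i))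
  | _, _, .mapR a => H.map (vtup (iO F G H P Q) sz fun i => iH (a i))

theorem iH_sound (hγ : IsGDin Φ F G γ) (hδ : IsGDin Ψ G H δ) {X Y : DObj m n p}
    {a b : DTerm Φ Ψ X Y} (hab : DEq a b) :
    iH Φ Ψ F G H γ δ f a = iH Φ Ψ F G H γ δ f b := by
  have hid : ∀ X, iH Φ Ψ F G H γ δ f (.id X) = 𝟙 _ := fun X => by simp only [iH]
  have hc : ∀ {X Y Z} (a : DTerm Φ Ψ X Y) (b : DTerm Φ Ψ Y Z), iH Φ Ψ F G H γ δ f (.comp a b) =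
    iH Φ Ψ F G H γ δ f a ≫ iH Φ Ψ F G H γ δ f b := fun a b => by simp only [iH]
  induction hab with
  | refl g => rfl
  | symm _ ih => exact ih.symm
  | trans _ _ ih₁ ih₂ => exact ih₁.trans ih₂
  | comp_congr _ _ ih₁ ih₂ => simp only [iH, ih₁, ih₂]
  | mapT_congr _ ih =>
    simp only [iH, ih]
    rfl
  | mapS_congr _ ih =>
    simp only [iH, ih]
    rfl
  | mapR_congr _ ih =>
    simp only [iH, ih]
    rfl
  | id_left g => simp only [iH, Category.id_comp]
  | id_right g => simp only [iH, Category.comp_id]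
  | assoc g h t => simp only [iH, Category.assoc]
  | functT a b =>
    simp only [iH]
    refine (F.map_comp _ _).symm.trans (congrArg (fun a => F.map a) ?_)
    funext i
    exact (vmk_dComp _ _ hc (sx i) (a i) (b i)).symm
  | functS a b =>
    simp only [iH]
    refine (G.map_comp _ _).symm.trans (congrArg (fun a => G.map a) ?_)
    funext i
    exact (vmk_dComp _ _ hc (sy i) (a i) (b i)).symm
  | functR a b =>
    simp only [iH]
    refine (H.map_comp _ _).symm.trans (congrArg (fun a => H.map a) ?_)
    funext i
    exact (vmk_dComp _ _ hc (sz i) (a i) (b i)).symm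
  | functT_id X =>
    simp only [iH]
    refine Eq.trans (congrArg (fun a => F.map a) ?_) (F.map_id _)
    funext i
    exact vmk_dId _ (iH Φ Ψ F G H γ δ f) hid (sx i) (X i)
  | functS_id X =>
    simp only [iH]
    refine Eq.trans (congrArg (fun a => G.map a) ?_) (G.map_id _)
    funext i
    exact vmk_dId _ (iH Φ Ψ F G H γ δ f) hid (sy i) (X i)
  | functR_id X =>
    simp only [iH]
    refine Eq.trans (congrArg (fun a => H.map a) ?_) (H.map_id _)
    funext i
    exact vmk_dId _ (iH Φ Ψ F G H γ δ f) hid (sz i) (X i)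
  | alphaEq i Z t =>
    simp only [iH]
    exact (hex_iff Φ F G γ i (fun c => iO F G H P Q (Z c)) _ _ (iH Φ Ψ F G H γ δ f t) _ _
      (o_updF _ _ _ _) (o_updF _ _ _ _) _ _ (mix_hexObj _ _ _ _ _ _ _) (mix_hexObj _ _ _ _ _ _ _)
      _ _ _ _ (vecA_hex _ (iH Φ Ψ F G H γ δ f) _ _ _ _ _ hid)
      (vecB_hex _ (iH Φ Ψ F G H γ δ f) _ _ _ _ _ hid)
      (vecC_hex _ (iH Φ Ψ F G H γ δ f) _ _ _ _ _ hid)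
      (vecD_hex _ (iH Φ Ψ F G H γ δ f) _ _ _ _ _ hid)).1 (hγ _ _ _ _ _)
  | betaEq i Z t =>
    simp only [iH]
    exact (hex_iff Ψ G H δ i (fun c => iO F G H P Q (Z c)) _ _ (iH Φ Ψ F G H γ δ f t) _ _
      (o_updF _ _ _ _) (o_updF _ _ _ _) _ _ (mix_hexObj _ _ _ _ _ _ _) (mix_hexObj _ _ _ _ _ _ _)
      _ _ _ _ (vecA_hex _ (iH Φ Ψ F G H γ δ f) _ _ _ _ _ hid)
      (vecB_hex _ (iH Φ Ψ F G H γ δ f) _ _ _ _ _ hid)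
      (vecC_hex _ (iH Φ Ψ F G H γ δ f) _ _ _ _ _ hid)
      (vecD_hex _ (iH Φ Ψ F G H γ δ f) _ _ _ _ _ hid)).1 (hδ _ _ _ _ _)

theorem provides_of_DEq (hD : DEq (natLHS Φ Ψ) (natRHS Φ Ψ)) : Provides.{u, v} Φ Ψ := by
  intro B _ F G H γ δ hγ hδ P Q f
  have key := iH_sound Φ Ψ F G H γ δ f hγ hδ hD
  have hid : ∀ X, iH Φ Ψ F G H γ δ f (.id X) = 𝟙 _ := fun X => by simp only [iH]
  unfold natLHS natRHS at key
  simp only [iH] at key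
  have hf : iH Φ Ψ F G H γ δ f .f = f := by
    simp only [iH]
    rfl
  have e₁ := gvecC_tup _ (iH Φ Ψ F G H γ δ f) hid
  have e₂ := gvecA_tup _ (iH Φ Ψ F G H γ δ f) hid
  have e₃ := rvecC_tup _ (iH Φ Ψ F G H γ δ f) hid
  have e₄ := rvecA_tup _ (iH Φ Ψ F G H γ δ f) hid
  rw [hf] at e₁ e₂ e₃ e₄
  have k₁ := comp3_heq
    (b := (γ (fun _ => Q) ≫ δ (fun _ => Q) : F.obj (tupObj sx Q Q) ⟶ H.obj (tupObj sz Q Q)))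
    (congrArg F.obj (cond_tupObj (iO F G H P Q) sx .A .C)) rfl rfl
    (congrArg H.obj (cond_tupObj (iO F G H P Q) sz .C .A))
    (map_heq F (cond_tupObj _ _ _ _) rfl e₁) HEq.rfl (map_heq H rfl (cond_tupObj _ _ _ _) e₃)
  have k₂ := comp3_heq
    (b := (γ (fun _ => P) ≫ δ (fun _ => P) : F.obj (tupObj sx P P) ⟶ H.obj (tupObj sz P P)))
    (congrArg F.obj (cond_tupObj (iO F G H P Q) sx .A .C)) rfl rfl
    (congrArg H.obj (cond_tupObj (iO F G H P Q) sz .C .A))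
    (map_heq F (cond_tupObj _ _ _ _) rfl e₂) HEq.rfl (map_heq H rfl (cond_tupObj _ _ _ _) e₄)
  apply eq_of_heq
  refine k₁.symm.trans (HEq.trans (heq_of_eq ?_) k₂)
  simp only [Category.assoc]
  exact key

end Sound

section FreeCat

variable {m n p gΦ gΨ : ℕ} {sx : Fin m → Bool} {sy : Fin n → Bool} {sz : Fin p → Bool}
variable (Φ : GGraph m n gΦ sx sy) (Ψ : GGraph n p gΨ sy sz)

/-- objects of the category `𝒟`, lifted to a universe -/
structure DC (Φ : GGraph m n gΦ sx sy) (Ψ : GGraph n p gΨ sy sz) : Type u where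
  mk ::
  dn : DObj m n p

/-- the setoid of provable equality -/
def dSetoid (X Y : DObj m n p) : Setoid (DTerm Φ Ψ X Y) where
  r := DEq
  iseqv := ⟨DEq.refl, DEq.symm, DEq.trans⟩

instance instDC : Category.{v} (DC.{u} Φ Ψ) where
  Hom X Y := ULift.{v} (Quotient (dSetoid Φ Ψ X.dn Y.dn))
  id X := ⟨Quotient.mk _ (.id X.dn)⟩
  comp a b := ⟨Quotient.map₂ DTerm.comp (fun _ _ h₁ _ _ h₂ => DEq.comp_congr h₁ h₂) a.down b.down⟩
  id_comp := by
    rintro X Y ⟨⟨a⟩⟩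
    exact congrArg ULift.up (Quotient.sound (DEq.id_left a))
  comp_id := by
    rintro X Y ⟨⟨a⟩⟩
    exact congrArg ULift.up (Quotient.sound (DEq.id_right a))
  assoc := by
    rintro X Y Z W ⟨⟨a⟩⟩ ⟨⟨b⟩⟩ ⟨⟨c⟩⟩
    exact congrArg ULift.up (Quotient.sound (DEq.assoc a b c))

/-- the canonical interpretation on objects -/
abbrev cO : DObj m n p → DC.{u} Φ Ψ := DC.mk

/-- the canonical interpretation on terms -/
def cH {X Y : DObj m n p} (t : DTerm Φ Ψ X Y) : cO.{u} Φ Ψ X ⟶ cO.{u} Φ Ψ Y :=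
  (ULift.up (Quotient.mk (dSetoid Φ Ψ X Y) t) : ULift.{v} _)

variable {Φ Ψ}

theorem cH_eq {X Y : DObj m n p} {a b : DTerm Φ Ψ X Y} :
    cH.{u, v} Φ Ψ a = cH.{u, v} Φ Ψ b ↔ DEq a b := by
  constructor
  · intro h
    exact Quotient.exact (s := dSetoid Φ Ψ X Y) (congrArg ULift.down h)
  · intro h
    exact congrArg ULift.up (Quotient.sound h)

theorem cH_comp {X Y Z : DObj m n p} (a : DTerm Φ Ψ X Y) (b : DTerm Φ Ψ Y Z) :
    cH.{u, v} Φ Ψ (.comp a b) = cH.{u, v} Φ Ψ a ≫ cH.{u, v} Φ Ψ b := rfl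

theorem cH_id (X : DObj m n p) : cH.{u, v} Φ Ψ (.id X) = 𝟙 (cO.{u} Φ Ψ X) := rfl

theorem cH_surj {X Y : DObj m n p} (g : cO.{u} Φ Ψ X ⟶ cO.{u} Φ Ψ Y) :
    ∃ t, cH.{u, v} Φ Ψ t = g := by
  rcases g with ⟨⟨t⟩⟩
  exact ⟨t, rfl⟩

/-- underlying object of an argument -/
def un : (b : Bool) → VarCat (DC.{u} Φ Ψ) b → DObj m n p
  | true, X => X.dn
  | false, X => (Opposite.unop X).dn

theorem un_pair (b : Bool) (X : DC.{u} Φ Ψ) : un b (pairObj b X X) = X.dn := by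
  cases b <;> rfl

/-- a representative term of an argument -/
noncomputable def rep : (b : Bool) → {X Y : VarCat (DC.{u} Φ Ψ) b} → (X ⟶ Y) →
    DTerm Φ Ψ (dSrc b (un b X) (un b Y)) (dTgt b (un b X) (un b Y))
  | true, _, _, g => Quotient.out g.down
  | false, _, _, g => Quotient.out g.unop.down

theorem rep_id (b : Bool) (X : VarCat (DC.{u} Φ Ψ) b) : DEq (rep b (𝟙 X)) (dId (un b X) b) := by
  cases b
  · exact Quotient.mk_out (s := dSetoid Φ Ψ _ _) _
  · exact Quotient.mk_out (s := dSetoid Φ Ψ _ _) _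

theorem out_comp {X Y Z : DC.{u} Φ Ψ} (f : X ⟶ Y) (g : Y ⟶ Z) :
    DEq (Quotient.out (f ≫ g : X ⟶ Z).down) (.comp (Quotient.out f.down) (Quotient.out g.down)) := by
  refine Quotient.exact (s := dSetoid Φ Ψ _ _) ((Quotient.out_eq _).trans ?_)
  have hf : f = ULift.up (Quotient.mk _ (Quotient.out f.down)) :=
    congrArg ULift.up (Quotient.out_eq f.down).symm
  have hg : g = ULift.up (Quotient.mk _ (Quotient.out g.down)) :=
    congrArg ULift.up (Quotient.out_eq g.down).symm
  conv_lhs => rw [hf, hg]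
  rfl

theorem rep_comp (b : Bool) {X Y Z : VarCat (DC.{u} Φ Ψ) b} (f : X ⟶ Y) (g : Y ⟶ Z) :
    DEq (rep b (f ≫ g)) (dComp b (rep b f) (rep b g)) := by
  cases b
  · exact out_comp (Quiver.Hom.unop g) (Quiver.Hom.unop f)
  · exact out_comp f g

/-- an argument term with cast source and target -/
def castV : (b : Bool) → {X Y : DObj m n p} → DTerm Φ Ψ (dSrc b X Y) (dTgt b X Y) →
    DTerm Φ Ψ
      (dSrc b (un b (pairObj b (cO.{u} Φ Ψ X) (cO Φ Ψ X))) (un b (pairObj b (cO.{u} Φ Ψ Y) (cO Φ Ψ Y))))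
      (dTgt b (un b (pairObj b (cO.{u} Φ Ψ X) (cO Φ Ψ X))) (un b (pairObj b (cO.{u} Φ Ψ Y) (cO Φ Ψ Y))))
  | true, _, _, t => t
  | false, _, _, t => t

theorem castV_heq (b : Bool) {X Y : DObj m n p} (t : DTerm Φ Ψ (dSrc b X Y) (dTgt b X Y)) :
    HEq (castV b t) t := by
  cases b <;> rfl

theorem rep_vmk (b : Bool) {X Y : DObj m n p} (t : DTerm Φ Ψ (dSrc b X Y) (dTgt b X Y)) :
    DEq (rep b (vmk (cO.{u} Φ Ψ) b (cH.{u, v} Φ Ψ t))) (castV b t) := by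
  cases b
  · exact Quotient.mk_out (s := dSetoid Φ Ψ _ _) _
  · exact Quotient.mk_out (s := dSetoid Φ Ψ _ _) _

/-- the functor on `𝒟` given by an operation -/
noncomputable def opF {q : ℕ} (s : Fin q → Bool) (op : (Fin q → DObj m n p) → DObj m n p)
    (mp : ∀ {X Y : Fin q → DObj m n p},
      (∀ i, DTerm Φ Ψ (dSrc (s i) (X i) (Y i)) (dTgt (s i) (X i) (Y i))) →
      DTerm Φ Ψ (op X) (op Y))
    (hcongr : ∀ {X Y : Fin q → DObj m n p}
      {a b : ∀ i, DTerm Φ Ψ (dSrc (s i) (X i) (Y i)) (dTgt (s i) (X i) (Y i))},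
      (∀ i, DEq (a i) (b i)) → DEq (mp a) (mp b))
    (hcomp : ∀ {X Y Z : Fin q → DObj m n p}
      (a : ∀ i, DTerm Φ Ψ (dSrc (s i) (X i) (Y i)) (dTgt (s i) (X i) (Y i)))
      (b : ∀ i, DTerm Φ Ψ (dSrc (s i) (Y i) (Z i)) (dTgt (s i) (Y i) (Z i))),
      DEq (.comp (mp a) (mp b)) (mp (fun i => dComp (s i) (a i) (b i))))
    (hid : ∀ X : Fin q → DObj m n p, DEq (mp (fun i => dId (X i) (s i))) (.id (op X))) :
    CategoryTheory.Functor.{v, v, u, u} (∀ i, VarCat (DC.{u} Φ Ψ) (s i)) (DC.{u} Φ Ψ) where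
  obj U := cO Φ Ψ (op fun i => un (s i) (U i))
  map a := cH.{u, v} Φ Ψ (mp fun i => rep (s i) (a i))
  map_id U := cH_eq.{u, v}.2 ((hcongr fun i => rep_id (s i) (U i)).trans (hid _))
  map_comp f g := cH_eq.{u, v}.2 ((hcongr fun i => rep_comp (s i) (f i) (g i)).trans (hcomp _ _).symm)

theorem mp_heq {q : ℕ} (s : Fin q → Bool) (op : (Fin q → DObj m n p) → DObj m n p)
    (mp : ∀ {X Y : Fin q → DObj m n p},
      (∀ i, DTerm Φ Ψ (dSrc (s i) (X i) (Y i)) (dTgt (s i) (X i) (Y i))) →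
      DTerm Φ Ψ (op X) (op Y)) {X Y X' Y' : Fin q → DObj m n p} (hX : X = X') (hY : Y = Y')
    (a : ∀ i, DTerm Φ Ψ (dSrc (s i) (X i) (Y i)) (dTgt (s i) (X i) (Y i)))
    (a' : ∀ i, DTerm Φ Ψ (dSrc (s i) (X' i) (Y' i)) (dTgt (s i) (X' i) (Y' i)))
    (h : ∀ i, HEq (a i) (a' i)) : HEq (cH.{u, v} Φ Ψ (mp a)) (cH.{u, v} Φ Ψ (mp a')) := by
  subst hX hY
  obtain rfl : a = a' := funext fun i => eq_of_heq (h i)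
  rfl

variable (Φ Ψ)

/-- the functor `T` -/
noncomputable def fT : CategoryTheory.Functor.{v, v, u, u} (∀ i, VarCat (DC.{u} Φ Ψ) (sx i)) (DC.{u} Φ Ψ) :=
  opF.{u, v} sx .T .mapT .mapT_congr .functT .functT_id

/-- the functor `S` -/
noncomputable def fS : CategoryTheory.Functor.{v, v, u, u} (∀ i, VarCat (DC.{u} Φ Ψ) (sy i)) (DC.{u} Φ Ψ) :=
  opF.{u, v} sy .S .mapS .mapS_congr .functS .functS_id

/-- the functor `R` -/
noncomputable def fR : CategoryTheory.Functor.{v, v, u, u} (∀ i, VarCat (DC.{u} Φ Ψ) (sz i)) (DC.{u} Φ Ψ) :=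
  opF.{u, v} sz .R .mapR .mapR_congr .functR .functR_id

theorem fT_obj (X : Fin m → DC.{u} Φ Ψ) :
    (fT.{u, v} Φ Ψ).obj (fun i => pairObj (sx i) (X i) (X i)) = cO Φ Ψ (.T fun i => (X i).dn) :=
  congrArg (fun W => cO Φ Ψ (.T W)) (funext fun i => un_pair (sx i) (X i))

theorem fT_map {X Y : Fin m → DObj m n p}
    (a : ∀ i, DTerm Φ Ψ (dSrc (sx i) (X i) (Y i)) (dTgt (sx i) (X i) (Y i))) :
    HEq ((fT.{u, v} Φ Ψ).map (vtup (cO.{u} Φ Ψ) sx fun i => cH.{u, v} Φ Ψ (a i)))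
      (cH.{u, v} Φ Ψ (.mapT a)) := by
  refine HEq.trans (heq_of_eq (cH_eq.{u, v}.2 (DEq.mapT_congr fun i => rep_vmk (sx i) (a i)))) ?_
  exact mp_heq sx .T .mapT (funext fun i => un_pair (sx i) _) (funext fun i => un_pair (sx i) _) _ _
    fun i => castV_heq (sx i) (a i)

theorem fS_obj (X : Fin n → DC.{u} Φ Ψ) :
    (fS.{u, v} Φ Ψ).obj (fun i => pairObj (sy i) (X i) (X i)) = cO Φ Ψ (.S fun i => (X i).dn) :=
  congrArg (fun W => cO Φ Ψ (.S W)) (funext fun i => un_pair (sy i) (X i))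

theorem fS_map {X Y : Fin n → DObj m n p}
    (a : ∀ i, DTerm Φ Ψ (dSrc (sy i) (X i) (Y i)) (dTgt (sy i) (X i) (Y i))) :
    HEq ((fS.{u, v} Φ Ψ).map (vtup (cO.{u} Φ Ψ) sy fun i => cH.{u, v} Φ Ψ (a i)))
      (cH.{u, v} Φ Ψ (.mapS a)) := by
  refine HEq.trans (heq_of_eq (cH_eq.{u, v}.2 (DEq.mapS_congr fun i => rep_vmk (sy i) (a i)))) ?_
  exact mp_heq sy .S .mapS (funext fun i => un_pair (sy i) _) (funext fun i => un_pair (sy i) _) _ _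
    fun i => castV_heq (sy i) (a i)

theorem fR_obj (X : Fin p → DC.{u} Φ Ψ) :
    (fR.{u, v} Φ Ψ).obj (fun i => pairObj (sz i) (X i) (X i)) = cO Φ Ψ (.R fun i => (X i).dn) :=
  congrArg (fun W => cO Φ Ψ (.R W)) (funext fun i => un_pair (sz i) (X i))

theorem fR_map {X Y : Fin p → DObj m n p}
    (a : ∀ i, DTerm Φ Ψ (dSrc (sz i) (X i) (Y i)) (dTgt (sz i) (X i) (Y i))) :
    HEq ((fR.{u, v} Φ Ψ).map (vtup (cO.{u} Φ Ψ) sz fun i => cH.{u, v} Φ Ψ (a i)))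
      (cH.{u, v} Φ Ψ (.mapR a)) := by
  refine HEq.trans (heq_of_eq (cH_eq.{u, v}.2 (DEq.mapR_congr fun i => rep_vmk (sz i) (a i)))) ?_
  exact mp_heq sz .R .mapR (funext fun i => un_pair (sz i) _) (funext fun i => un_pair (sz i) _) _ _
    fun i => castV_heq (sz i) (a i)

/-- the transformation `α` -/
noncomputable def cα (A : Fin Φ.k → DC.{u} Φ Ψ) :
    (fT.{u, v} Φ Ψ).obj (diagObj sx Φ.πL A) ⟶ (fS.{u, v} Φ Ψ).obj (diagObj sy Φ.πR A) :=
  cast (by rw [fT_obj Φ Ψ fun i => A (Φ.πL i), fS_obj Φ Ψ fun i => A (Φ.πR i)])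
    (cH.{u, v} Φ Ψ (.alpha fun c => (A c).dn))

/-- the transformation `β` -/
noncomputable def cβ (A : Fin Ψ.k → DC.{u} Φ Ψ) :
    (fS.{u, v} Φ Ψ).obj (diagObj sy Ψ.πL A) ⟶ (fR.{u, v} Φ Ψ).obj (diagObj sz Ψ.πR A) :=
  cast (by rw [fS_obj Φ Ψ fun i => A (Ψ.πL i), fR_obj Φ Ψ fun i => A (Ψ.πR i)])
    (cH.{u, v} Φ Ψ (.beta fun c => (A c).dn))

theorem cα_gdin : IsGDin Φ (fT.{u, v} Φ Ψ) (fS.{u, v} Φ Ψ) (cα Φ Ψ) := by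
  intro i A P Q f
  obtain ⟨t, rfl⟩ := cH_surj f
  let Z : Fin Φ.k → DObj m n p := fun c => (A c).dn
  refine (hex_iff Φ _ _ _ i (fun c => cO Φ Ψ (Z c)) _ _ (cH Φ Ψ t)
      (fun c => cO Φ Ψ (updF Z i P.dn c)) (fun c => cO Φ Ψ (updF Z i Q.dn c))
      (o_updF.{u, v} _ _ _ _) (o_updF.{u, v} _ _ _ _) _ _
      (mix_hexObj.{u, v} (cO Φ Ψ) _ _ _ _ _ _) (mix_hexObj.{u, v} (cO Φ Ψ) _ _ _ _ _ _)
      _ _ _ _ (vecA_hex _ (cH Φ Ψ) _ _ _ _ _ cH_id)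
      (vecB_hex _ (cH Φ Ψ) _ _ _ _ _ cH_id)
      (vecC_hex _ (cH Φ Ψ) _ _ _ _ _ cH_id)
      (vecD_hex _ (cH Φ Ψ) _ _ _ _ _ cH_id)).2 ?_
  have key : cH.{u, v} Φ Ψ (.mapT _) ≫ cH.{u, v} Φ Ψ (.alpha _) ≫ cH.{u, v} Φ Ψ (.mapS _) =
      cH.{u, v} Φ Ψ (.mapT _) ≫ cH.{u, v} Φ Ψ (.alpha _) ≫ cH.{u, v} Φ Ψ (.mapS _) :=
    cH_eq.{u, v}.2 (DEq.alphaEq i Z t)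
  apply eq_of_heq
  refine HEq.trans ?_ ((heq_of_eq key).trans ?_)
  · exact comp3_heq (fT_obj Φ Ψ _) (fT_obj Φ Ψ _) (fS_obj Φ Ψ _) (fS_obj Φ Ψ _)
      (fT_map Φ Ψ _) (cast_heq _ _) (fS_map Φ Ψ _)
  · exact (comp3_heq (fT_obj Φ Ψ _) (fT_obj Φ Ψ _) (fS_obj Φ Ψ _) (fS_obj Φ Ψ _)
      (fT_map Φ Ψ _) (cast_heq _ _) (fS_map Φ Ψ _)).symm

theorem cβ_gdin : IsGDin Ψ (fS.{u, v} Φ Ψ) (fR.{u, v} Φ Ψ) (cβ Φ Ψ) := by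
  intro i A P Q f
  obtain ⟨t, rfl⟩ := cH_surj f
  let Z : Fin Ψ.k → DObj m n p := fun c => (A c).dn
  refine (hex_iff Ψ _ _ _ i (fun c => cO Φ Ψ (Z c)) _ _ (cH Φ Ψ t)
      (fun c => cO Φ Ψ (updF Z i P.dn c)) (fun c => cO Φ Ψ (updF Z i Q.dn c))
      (o_updF.{u, v} _ _ _ _) (o_updF.{u, v} _ _ _ _) _ _
      (mix_hexObj.{u, v} (cO Φ Ψ) _ _ _ _ _ _) (mix_hexObj.{u, v} (cO Φ Ψ) _ _ _ _ _ _)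
      _ _ _ _ (vecA_hex _ (cH Φ Ψ) _ _ _ _ _ cH_id)
      (vecB_hex _ (cH Φ Ψ) _ _ _ _ _ cH_id)
      (vecC_hex _ (cH Φ Ψ) _ _ _ _ _ cH_id)
      (vecD_hex _ (cH Φ Ψ) _ _ _ _ _ cH_id)).2 ?_
  have key : cH.{u, v} Φ Ψ (.mapS _) ≫ cH.{u, v} Φ Ψ (.beta _) ≫ cH.{u, v} Φ Ψ (.mapR _) =
      cH.{u, v} Φ Ψ (.mapS _) ≫ cH.{u, v} Φ Ψ (.beta _) ≫ cH.{u, v} Φ Ψ (.mapR _) :=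
    cH_eq.{u, v}.2 (DEq.betaEq i Z t)
  apply eq_of_heq
  refine HEq.trans ?_ ((heq_of_eq key).trans ?_)
  · exact comp3_heq (fS_obj Φ Ψ _) (fS_obj Φ Ψ _) (fR_obj Φ Ψ _) (fR_obj Φ Ψ _)
      (fS_map Φ Ψ _) (cast_heq _ _) (fR_map Φ Ψ _)
  · exact (comp3_heq (fS_obj Φ Ψ _) (fS_obj Φ Ψ _) (fR_obj Φ Ψ _) (fR_obj Φ Ψ _)
      (fS_map Φ Ψ _) (cast_heq _ _) (fR_map Φ Ψ _)).symm

theorem comp4_heq {B : Type*} [Category B] {X Y Z V W X' Y' Z' V' W' : B}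
    (hX : X = X') (hY : Y = Y') (hZ : Z = Z') (hV : V = V') (hW : W = W')
    {a : X ⟶ Y} {b : Y ⟶ Z} {c : Z ⟶ V} {d : V ⟶ W}
    {a' : X' ⟶ Y'} {b' : Y' ⟶ Z'} {c' : Z' ⟶ V'} {d' : V' ⟶ W'}
    (ha : HEq a a') (hb : HEq b b') (hc : HEq c c') (hd : HEq d d') :
    HEq (a ≫ (b ≫ c) ≫ d) (a' ≫ b' ≫ c' ≫ d') := by
  subst hX hY hZ hV hW
  cases ha; cases hb; cases hc; cases hd
  simp

theorem DEq_of_provides (hP : Provides.{u, v} Φ Ψ) : DEq (natLHS Φ Ψ) (natRHS Φ Ψ) := by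
  have key := hP (fT.{u, v} Φ Ψ) (fS.{u, v} Φ Ψ) (fR.{u, v} Φ Ψ) (cα Φ Ψ) (cβ Φ Ψ)
    (cα_gdin Φ Ψ) (cβ_gdin Φ Ψ) _ _ (cH Φ Ψ .f)
  apply cH_eq.{u, v}.1
  change cH.{u, v} Φ Ψ (.mapT gvecC) ≫ cH.{u, v} Φ Ψ (.alpha fun _ => .C) ≫
      cH.{u, v} Φ Ψ (.beta fun _ => .C) ≫ cH.{u, v} Φ Ψ (.mapR rvecC) =
    cH.{u, v} Φ Ψ (.mapT gvecA) ≫ cH.{u, v} Φ Ψ (.alpha fun _ => .A) ≫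
      cH.{u, v} Φ Ψ (.beta fun _ => .A) ≫ cH.{u, v} Φ Ψ (.mapR rvecA)
  apply eq_of_heq
  refine HEq.trans ?_ ((heq_of_eq key).trans ?_)
  · refine (comp4_heq ?_ ?_ (fS_obj.{u, v} Φ Ψ fun _ => cO Φ Ψ .C) ?_ ?_ ?_
      (cast_heq _ _) (cast_heq _ _) ?_).symm
    · exact (congrArg _ (cond_tupObj.{u, v} (cO Φ Ψ) sx .A .C)).symm.trans (fT_obj Φ Ψ _)
    · exact fT_obj.{u, v} Φ Ψ fun _ => cO Φ Ψ .C
    · exact fR_obj.{u, v} Φ Ψ fun _ => cO Φ Ψ .C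
    · exact (congrArg _ (cond_tupObj.{u, v} (cO Φ Ψ) sz .C .A)).symm.trans (fR_obj Φ Ψ _)
    · exact (map_heq _ (cond_tupObj.{u, v} _ _ _ _) rfl (gvecC_tup _ (cH Φ Ψ) cH_id)).symm.trans
        (fT_map Φ Ψ _)
    · exact (map_heq _ rfl (cond_tupObj.{u, v} _ _ _ _) (rvecC_tup _ (cH Φ Ψ) cH_id)).symm.trans
        (fR_map Φ Ψ _)
  · refine comp4_heq ?_ ?_ (fS_obj.{u, v} Φ Ψ fun _ => cO Φ Ψ .A) ?_ ?_ ?_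
      (cast_heq _ _) (cast_heq _ _) ?_
    · exact (congrArg _ (cond_tupObj.{u, v} (cO Φ Ψ) sx .A .C)).symm.trans (fT_obj Φ Ψ _)
    · exact fT_obj.{u, v} Φ Ψ fun _ => cO Φ Ψ .A
    · exact fR_obj.{u, v} Φ Ψ fun _ => cO Φ Ψ .A
    · exact (congrArg _ (cond_tupObj.{u, v} (cO Φ Ψ) sz .C .A)).symm.trans (fR_obj Φ Ψ _)
    · exact (map_heq _ (cond_tupObj.{u, v} _ _ _ _) rfl (gvecA_tup _ (cH Φ Ψ) cH_id)).symm.trans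
        (fT_map Φ Ψ _)
    · exact (map_heq _ rfl (cond_tupObj.{u, v} _ _ _ _) (rvecA_tup _ (cH Φ Ψ) cH_id)).symm.trans
        (fR_map Φ Ψ _)

end FreeCat

/-- Lemma 2.1 of the paper.  Let `Φ` and `Ψ` be graphs satisfying
the compatibility conditions for amalgamation (shared `y` argument places with the
same signs, disjoint `G`-sets), with the amalgamation `Φ+Ψ` having a single
component, and let `𝒟` be the free category of the equational class `𝒦_{Φ,Ψ}`
generated by the arrow `f : A → C` (here constructed syntactically as `DTerm`
modulo `DEq`).  Then `Φ+Ψ` provides g-dinaturality iff the equation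
`R⟨1_C,f⟩ ∘ β(C,…,C) ∘ α(C,…,C) ∘ T⟨f,1_C⟩ = R⟨f,1_A⟩ ∘ β(A,…,A) ∘ α(A,…,A) ∘ T⟨1_A,f⟩`
holds in `𝒟`. -/
theorem provides_iff_nat_eq_in_D
    {m n p gΦ gΨ : ℕ} {sx : Fin m → Bool} {sy : Fin n → Bool} {sz : Fin p → Bool}
    (Φ : GGraph m n gΦ sx sy) (Ψ : GGraph n p gΨ sy sz)
    (hconn : AmalgConnected Φ Ψ) :
    Provides.{u, v} Φ Ψ ↔ DEq (natLHS Φ Ψ) (natRHS Φ Ψ) := by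
  exact ⟨DEq_of_provides Φ Ψ, provides_of_DEq Φ Ψ⟩
end GDin
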